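/- Let a, b be positive integers with a ≤ b. If the quadratic form f^{a,b}_3(x,y,z,w) = a·x² + b·y² + 3·(z² + z·w + w²) represents each of the integers 1, 2, 6 (with x, y, z, w ∈ ℤ), then it represents every nonnegative integer. -/

import Mathlib

/-!
Representing `1`, `2` and `6` forces `a = 1` and `b = 2`, by congruences modulo `3` and `9`.
Conversely, `x² + 2y² + 3(z² + zw + w²)` is reached from the ternary form `u² + v² + vw + w²`. Up
to equivalence, the latter is the only positive definite integral ternary form of half-discriminant
`3`, since a basis minimising the sum of the diagonal coefficients must have all of them equal to
`1`. Hence it takes the value `m` as soon as some positive definite form of half-discriminant `3`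
has diagonal coefficient `m`. As in the proof of the three-square theorem, Dirichlet's theorem and
quadratic reciprocity produce such a form when `3 ∤ m` or `m ≡ 3 mod 9`. Apart from four small
values, every `n` prime to `3` is of the form `m + 2y²` for such an `m`, and the quaternary form
absorbs a factor `3`.
-/

open Module QuadraticMap
open scoped NumberTheorySymbols

/-! ### Reduced bases -/

section ReducedBasis

variable {ι M : Type*} [AddCommGroup M] {Q : QuadraticForm ℤ M} {b : Basis ι ℤ M}

/-- A basis is reduced for an integral quadratic form if none of its vectors can be given a smaller
value by adding to it a combination of the other ones (encoded by the vanishing of a coordinate). -/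
def IsReducedBasis (Q : QuadraticForm ℤ M) (b : Basis ι ℤ M) : Prop :=
  ∀ i v, b.coord i v = 0 → Q (b i) ≤ Q (b i + v)

theorem apply_le_of_sum_le_sum_update [Fintype ι] [DecidableEq ι] {N : Type*} {f : N → ℤ}
    {e : ι → N} {i : ι} {x : N} (h : ∑ j, f (e j) ≤ ∑ j, f (Function.update e i x j)) :
    f (e i) ≤ f x := by
  have hsum (g : ι → N) := Finset.add_sum_erase Finset.univ (fun j => f (g j)) (Finset.mem_univ i)
  have hrest : ∑ j ∈ Finset.univ.erase i, f (Function.update e i x j) =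
      ∑ j ∈ Finset.univ.erase i, f (e j) :=
    Finset.sum_congr rfl fun j hj => by rw [Function.update_of_ne (Finset.ne_of_mem_erase hj)]
  rw [← hsum e, ← hsum (Function.update e i x), hrest, Function.update_self] at h
  exact le_of_add_le_add_right h

theorem exists_isReducedBasis [Finite ι] (hQ : ∀ v, 0 ≤ Q v) (b₀ : Basis ι ℤ M) :
    ∃ b : Basis ι ℤ M, IsReducedBasis Q b := by
  classical
  cases nonempty_fintype ι
  obtain ⟨b, -, hmin⟩ := exists_minimalFor_of_wellFoundedLT (fun _ : Basis ι ℤ M => True)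
    (fun b => (∑ i, Q (b i)).toNat) ⟨b₀, trivial⟩
  refine ⟨b, fun i v hv => apply_le_of_sum_le_sum_update ?_⟩
  let b' : Basis ι ℤ M := b.map (LinearEquiv.transvection hv)
  have hb' : ⇑b' = Function.update b i (b i + v) := by
    ext j
    rcases eq_or_ne j i with rfl | hji <;> simp [b', LinearMap.transvection.apply, *]
  have hle : (∑ j, Q (b j)).toNat ≤ (∑ j, Q (b' j)).toNat :=
    (le_total _ _).elim id (hmin (j := b') trivial)
  have hnonneg : 0 ≤ ∑ j, Q (b' j) := Finset.sum_nonneg fun j _ => hQ _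
  rw [← hb']
  lia

theorem IsReducedBasis.abs_polar_le_min (hb : IsReducedBasis Q b) {i j : ι} (hij : i ≠ j) :
    |polar Q (b i) (b j)| ≤ min (Q (b i)) (Q (b j)) := by
  have hadd_right := hb i (b j) (by simp [hij])
  have hsub_right := hb i (-b j) (by simp [hij])
  have hadd_left := hb j (b i) (by simp [hij.symm])
  have hsub_left := hb j (-b i) (by simp [hij.symm])
  simp only [QuadraticMap.map_add Q, Q.map_neg, polar_neg_right, polar_comm Q (b j) (b i)] at *
  rw [le_min_iff, abs_le, abs_le]
  refine ⟨⟨?_, ?_⟩, ?_, ?_⟩ <;> linarith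

theorem IsReducedBasis.abs_polar_add_abs_polar_add_abs_polar_le (hb : IsReducedBasis Q b)
    {i j k : ι} (hij : i ≠ j) (hik : i ≠ k)
    (hneg : polar Q (b j) (b k) * polar Q (b i) (b k) * polar Q (b i) (b j) < 0) :
    |polar Q (b j) (b k)| + |polar Q (b i) (b k)| + |polar Q (b i) (b j)| ≤ Q (b j) + Q (b k) := by
  set r := polar Q (b j) (b k)
  set s := polar Q (b i) (b k)
  set t := polar Q (b i) (b j)
  have hsign : s.sign * t.sign * r = -|r| := by
    have h := Int.sign_eq_neg_one_of_neg hneg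
    rw [Int.sign_mul, Int.sign_mul] at h
    linear_combination (-s.sign * t.sign) * Int.sign_mul_abs r + |r| * h
  have hs : s.sign * s.sign = 1 := by
    rw [← Int.sign_mul, Int.sign_eq_one_of_pos]
    exact mul_self_pos.2 fun h0 => by simp [h0] at hneg
  have ht : t.sign * t.sign = 1 := by
    rw [← Int.sign_mul, Int.sign_eq_one_of_pos]
    exact mul_self_pos.2 fun h0 => by simp [h0] at hneg
  have h := hb i (-t.sign • b j + -s.sign • b k) (by simp [hij, hik])
  simp only [QuadraticMap.map_add Q, Q.map_smul, polar_add_right, polar_smul_left,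
    polar_smul_right, neg_mul_neg, hs, ht, smul_eq_mul] at h
  linarith [Int.sign_mul_self_eq_abs s, Int.sign_mul_self_eq_abs t]

theorem det_toMatrix_eq_det_toMatrix [Fintype ι] [DecidableEq ι] (B : LinearMap.BilinForm ℤ M)
    (b c : Basis ι ℤ M) :
    (LinearMap.BilinForm.toMatrix b B).det = (LinearMap.BilinForm.toMatrix c B).det := by
  have hunit : IsUnit (b.toMatrix c).det := b.det_apply c ▸ b.isUnit_det c
  rw [← LinearMap.BilinForm.toMatrix_mul_basis_toMatrix b c B, Matrix.det_mul, Matrix.det_mul,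
    Matrix.det_transpose, mul_right_comm, ← pow_two, Int.isUnit_sq hunit, one_mul]

end ReducedBasis

/-! ### Ternary forms of discriminant three -/

/-- The half-discriminant of the ternary form `ax² + by² + cz² + ryz + sxz + txy`. -/
def ternaryDisc {R : Type*} [CommRing R] (a b c r s t : R) : R :=
  4 * a * b * c + r * s * t - a * r ^ 2 - b * s ^ 2 - c * t ^ 2

theorem ternaryDisc_rotate {R : Type*} [CommRing R] (a b c r s t : R) :
    ternaryDisc b c a s t r = ternaryDisc a b c r s t := by
  unfold ternaryDisc
  ring

theorem det_toMatrix_polarBilin {R M : Type*} [CommRing R] [AddCommGroup M] [Module R M]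
    (Q : QuadraticForm R M) (b : Basis (Fin 3) R M) :
    (LinearMap.BilinForm.toMatrix b Q.polarBilin).det =
      2 * ternaryDisc (Q (b 0)) (Q (b 1)) (Q (b 2))
        (polar Q (b 1) (b 2)) (polar Q (b 0) (b 2)) (polar Q (b 0) (b 1)) := by
  simp only [Matrix.det_fin_three, LinearMap.BilinForm.toMatrix_apply, polarBilin_apply_apply,
    polar_self, polar_comm Q (b 1) (b 0), polar_comm Q (b 2) (b 0), polar_comm Q (b 2) (b 1),
    ternaryDisc]
  ring

theorem apply_eq_of_basis_fin_three {R M : Type*} [CommRing R] [AddCommGroup M] [Module R M]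
    (Q : QuadraticForm R M) (b : Basis (Fin 3) R M) (v : M) :
    Q v = Q (b 0) * b.repr v 0 ^ 2 + Q (b 1) * b.repr v 1 ^ 2 + Q (b 2) * b.repr v 2 ^ 2
      + polar Q (b 1) (b 2) * (b.repr v 1 * b.repr v 2)
      + polar Q (b 0) (b 2) * (b.repr v 0 * b.repr v 2)
      + polar Q (b 0) (b 1) * (b.repr v 0 * b.repr v 1) := by
  conv_lhs => rw [← b.sum_repr v, Fin.sum_univ_three]
  simp only [QuadraticMap.map_add Q, Q.map_smul, polar_add_left, polar_smul_left,
    polar_smul_right, smul_eq_mul]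
  ring

section Coefficients

variable {a b c r s t : ℤ}

theorem nine_le_two_mul_ternaryDisc_neg (hr : 0 < r) (hs : 0 < s) (ht : 0 < t)
    (hrbc : r ≤ min b c) (hsac : s ≤ min a c) (htab : t ≤ min a b)
    (hab : r + s + t ≤ a + b) (hac : r + s + t ≤ a + c) (hbc : r + s + t ≤ b + c) :
    9 ≤ 2 * ternaryDisc a b c (-r) (-s) (-t) := by
  rw [le_min_iff] at hrbc hsac htab
  -- Selling parameters: together with `r`, `s`, `t` they weight the edges of `K₄`, and twice the
  -- half-discriminant is the weighted number of spanning trees.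
  obtain ⟨α, hα⟩ : ∃ α, α = 2 * a - s - t := ⟨_, rfl⟩
  obtain ⟨β, hβ⟩ : ∃ β, β = 2 * b - r - t := ⟨_, rfl⟩
  obtain ⟨γ, hγ⟩ : ∃ γ, γ = 2 * c - r - s := ⟨_, rfl⟩
  have hα_nonneg : 0 ≤ α := by linarith
  have hβ_nonneg : 0 ≤ β := by linarith
  have hγ_nonneg : 0 ≤ γ := by linarith
  have hsum : 3 ≤ α + β + γ := by linarith
  have hprod : 3 ≤ r * s + r * t + s * t := by nlinarith
  calc 9 ≤ (α + β + γ) * (r * s + r * t + s * t) := by nlinarith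
    _ ≤ α * β * γ + α * β * (r + s) + α * γ * (r + t) + β * γ * (s + t)
        + (α + β + γ) * (r * s + r * t + s * t) := le_add_of_nonneg_left (by positivity)
    _ = 2 * ternaryDisc a b c (-r) (-s) (-t) := by subst hα hβ hγ; unfold ternaryDisc; ring

theorem nine_le_two_mul_ternaryDisc (hrst : r * s * t < 0)
    (hr : |r| ≤ min b c) (hs : |s| ≤ min a c) (ht : |t| ≤ min a b)
    (hab : |r| + |s| + |t| ≤ a + b) (hac : |r| + |s| + |t| ≤ a + c)
    (hbc : |r| + |s| + |t| ≤ b + c) : 9 ≤ 2 * ternaryDisc a b c r s t := by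
  have hr0 : r ≠ 0 := by rintro rfl; simp at hrst
  have hs0 : s ≠ 0 := by rintro rfl; simp at hrst
  have ht0 : t ≠ 0 := by rintro rfl; simp at hrst
  have habs : |r| * |s| * |t| = -(r * s * t) := by rw [← abs_mul, ← abs_mul, abs_of_neg hrst]
  have hdisc : ternaryDisc a b c (-|r|) (-|s|) (-|t|) = ternaryDisc a b c r s t := by
    simp only [ternaryDisc, neg_sq, sq_abs]
    linear_combination -habs
  rw [← hdisc]
  exact nine_le_two_mul_ternaryDisc_neg (abs_pos.2 hr0) (abs_pos.2 hs0) (abs_pos.2 ht0)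
    hr hs ht hab hac hbc

theorem eq_one_of_ternaryDisc_le_three (ha : 0 < a) (hb : 0 < b) (hac : a ≤ c) (hbc : b ≤ c)
    (hr : |r| ≤ b) (hs : |s| ≤ a) (ht : |t| ≤ min a b) (hrst : 0 ≤ r * s * t)
    (hd : ternaryDisc a b c r s t ≤ 3) : c = 1 := by
  rw [le_min_iff] at ht
  have hr_sq : a * r ^ 2 ≤ a * b ^ 2 :=
    mul_le_mul_of_nonneg_left (sq_le_sq.2 (by rwa [abs_of_pos hb])) ha.le
  have hs_sq : b * s ^ 2 ≤ b * a ^ 2 :=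
    mul_le_mul_of_nonneg_left (sq_le_sq.2 (by rwa [abs_of_pos ha])) hb.le
  have ht_sq : c * t ^ 2 ≤ c * (a * b) := by
    rw [← sq_abs, pow_two]
    exact mul_le_mul_of_nonneg_left (mul_le_mul ht.1 ht.2 (abs_nonneg t) ha.le) (by linarith)
  have hle : a * b * (3 * c - a - b) ≤ 3 := by
    unfold ternaryDisc at hd
    linarith
  by_contra hc
  have hab : a * b = 1 := by
    have : 2 ≤ 3 * c - a - b := by omega
    have : 0 < a * b := mul_pos ha hb
    nlinarith
  obtain rfl : a = 1 := Int.eq_one_of_mul_eq_one_right ha.le hab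
  obtain rfl : b = 1 := Int.eq_one_of_mul_eq_one_left hb.le hab
  omega

theorem diagonal_eq_one_of_ternaryDisc_le_three (ha : 0 < a) (hb : 0 < b) (hc : 0 < c)
    (hr : |r| ≤ min b c) (hs : |s| ≤ min a c) (ht : |t| ≤ min a b) (hrst : 0 ≤ r * s * t)
    (hd : ternaryDisc a b c r s t ≤ 3) : a = 1 ∧ b = 1 ∧ c = 1 := by
  obtain ⟨hrb, hrc⟩ := le_min_iff.1 hr
  obtain ⟨hsa, hsc⟩ := le_min_iff.1 hs
  obtain ⟨hta, htb⟩ := le_min_iff.1 ht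
  have hcmax (hac : a ≤ c) (hbc : b ≤ c) : c = 1 :=
    eq_one_of_ternaryDisc_le_three ha hb hac hbc hrb hsa ht hrst hd
  have hamax (hba : b ≤ a) (hca : c ≤ a) : a = 1 :=
    eq_one_of_ternaryDisc_le_three hb hc hba hca hsc htb hr (by linarith)
      ((ternaryDisc_rotate a b c r s t).trans_le hd)
  have hbmax (hcb : c ≤ b) (hab : a ≤ b) : b = 1 :=
    eq_one_of_ternaryDisc_le_three hc ha hcb hab hta hrc (min_comm a c ▸ hs) (by linarith)
      ((ternaryDisc_rotate c a b t r s).symm.trans_le hd)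
  omega

/-- The values of the ternary form `u² + v² + vw + w²`; Löschian numbers are the values of
`v² + vw + w²`. -/
def IsSquareAddLoeschian (m : ℤ) : Prop :=
  ∃ u v w : ℤ, m = u ^ 2 + (v ^ 2 + v * w + w ^ 2)

theorem isSquareAddLoeschian_of_ternaryDisc_eq_three (hr : |r| ≤ 1) (hs : |s| ≤ 1) (ht : |t| ≤ 1)
    (hd : ternaryDisc 1 1 1 r s t = 3) (x y z : ℤ) :
    IsSquareAddLoeschian (x ^ 2 + y ^ 2 + z ^ 2 + r * (y * z) + s * (x * z) + t * (x * y)) := by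
  unfold ternaryDisc at hd
  obtain ⟨hr, hr'⟩ := abs_le.1 hr
  obtain ⟨hs, hs'⟩ := abs_le.1 hs
  obtain ⟨ht, ht'⟩ := abs_le.1 ht
  -- exactly one of `r`, `s`, `t` is nonzero
  interval_cases r <;> interval_cases s <;> interval_cases t <;> norm_num at hd
  · exact ⟨x, y, -z, by ring⟩
  · exact ⟨y, x, -z, by ring⟩
  · exact ⟨z, x, -y, by ring⟩
  · exact ⟨z, x, y, by ring⟩
  · exact ⟨y, x, z, by ring⟩
  · exact ⟨x, y, z, by ring⟩

end Coefficients

section ClassNumber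

variable {M : Type*} [AddCommGroup M] {Q : QuadraticForm ℤ M} {b : Basis (Fin 3) ℤ M}

theorem IsReducedBasis.polar_mul_polar_mul_polar_nonneg (hb : IsReducedBasis Q b)
    (hdet : (LinearMap.BilinForm.toMatrix b Q.polarBilin).det < 9) :
    0 ≤ polar Q (b 1) (b 2) * polar Q (b 0) (b 2) * polar Q (b 0) (b 1) := by
  by_contra! hneg
  have hbc := hb.abs_polar_add_abs_polar_add_abs_polar_le (i := 0) (j := 1) (k := 2)
    (by decide) (by decide) hneg
  have hac := hb.abs_polar_add_abs_polar_add_abs_polar_le (i := 1) (j := 0) (k := 2)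
    (by decide) (by decide) (by rw [polar_comm Q (b 1) (b 0)]; linarith)
  have hab := hb.abs_polar_add_abs_polar_add_abs_polar_le (i := 2) (j := 0) (k := 1)
    (by decide) (by decide) (by rw [polar_comm Q (b 2) (b 0), polar_comm Q (b 2) (b 1)]; linarith)
  rw [polar_comm Q (b 1) (b 0)] at hac
  rw [polar_comm Q (b 2) (b 0), polar_comm Q (b 2) (b 1)] at hab
  have hdisc := nine_le_two_mul_ternaryDisc hneg (hb.abs_polar_le_min (by decide))
    (hb.abs_polar_le_min (by decide)) (hb.abs_polar_le_min (by decide))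
    (by linarith) (by linarith) (by linarith)
  exact (hdisc.trans_eq (det_toMatrix_polarBilin Q b).symm).not_gt hdet

/-- The form `u² + v² + vw + w²` is alone in its genus. -/
theorem isSquareAddLoeschian_of_posDef (hQ : Q.PosDef) (b₀ : Basis (Fin 3) ℤ M)
    (hdet : (LinearMap.BilinForm.toMatrix b₀ Q.polarBilin).det = 6) (v : M) :
    IsSquareAddLoeschian (Q v) := by
  obtain ⟨b, hb⟩ := exists_isReducedBasis hQ.nonneg b₀
  rw [det_toMatrix_eq_det_toMatrix _ b₀ b] at hdet
  have hpos (i : Fin 3) : 0 < Q (b i) := hQ _ (b.ne_zero i)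
  have hr := hb.abs_polar_le_min (i := 1) (j := 2) (by decide)
  have hs := hb.abs_polar_le_min (i := 0) (j := 2) (by decide)
  have ht := hb.abs_polar_le_min (i := 0) (j := 1) (by decide)
  have hrst := hb.polar_mul_polar_mul_polar_nonneg (by omega)
  rw [det_toMatrix_polarBilin] at hdet
  obtain ⟨h0, h1, h2⟩ := diagonal_eq_one_of_ternaryDisc_le_three (hpos 0) (hpos 1) (hpos 2)
    hr hs ht hrst (by omega)
  rw [h0, h1, h2] at hdet
  rw [h1, h2, min_self] at hr
  rw [h0, h2, min_self] at hs
  rw [h0, h1, min_self] at ht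
  rw [apply_eq_of_basis_fin_three Q b v, h0, h1, h2, one_mul, one_mul, one_mul]
  exact isSquareAddLoeschian_of_ternaryDisc_eq_three hr hs ht (by omega) _ _ _

end ClassNumber

/-! ### Values of the ternary form -/

/-- The form `ax² + by² + cz² + ryz + sxz + txy`. -/
def ternaryForm (a b c r s t : ℤ) : QuadraticForm ℤ (Fin 3 → ℤ) :=
  !![a, t, s; 0, b, r; 0, 0, c].toQuadraticForm'

theorem ternaryForm_apply (a b c r s t : ℤ) (v : Fin 3 → ℤ) :
    ternaryForm a b c r s t v = a * v 0 ^ 2 + b * v 1 ^ 2 + c * v 2 ^ 2 + r * v 1 * v 2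
      + s * v 0 * v 2 + t * v 0 * v 1 := by
  simp only [ternaryForm, Matrix.toQuadraticForm', LinearMap.BilinMap.toQuadraticMap_apply,
    Matrix.toLinearMap₂'_apply, Matrix.of_apply, Matrix.cons_val', Matrix.cons_val_fin_one,
    Int.zsmul_eq_mul, Fin.sum_univ_three, Matrix.cons_val_zero, Matrix.cons_val_one,
    Matrix.cons_val, mul_zero, zero_add, add_zero]
  ring

theorem det_toMatrix_polarBilin_ternaryForm (a b c r s t : ℤ) :
    (LinearMap.BilinForm.toMatrix (Pi.basisFun ℤ (Fin 3))
      (ternaryForm a b c r s t).polarBilin).det = 2 * ternaryDisc a b c r s t := by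
  rw [det_toMatrix_polarBilin]
  congr 1
  simp only [polar, ternaryForm_apply, ternaryDisc, Pi.basisFun_apply, Pi.add_apply,
    Pi.single_eq_same, Pi.single_eq_of_ne, ne_eq, zero_ne_one, one_ne_zero, Fin.reduceEq,
    not_false_eq_true]
  ring

theorem posDef_ternaryForm {a b c s t : ℤ} (hb : 0 < b) (hc : 0 < c)
    (hd : 0 < ternaryDisc a b c 0 s t) : (ternaryForm a b c 0 s t).PosDef := by
  intro v hv
  by_contra! hle
  have hsquares : 4 * b * c * ternaryForm a b c 0 s t v = c * (2 * b * v 1 + t * v 0) ^ 2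
      + b * (2 * c * v 2 + s * v 0) ^ 2 + ternaryDisc a b c 0 s t * v 0 ^ 2 := by
    rw [ternaryForm_apply]
    unfold ternaryDisc
    ring
  have hnonpos : 4 * b * c * ternaryForm a b c 0 s t v ≤ 0 :=
    mul_nonpos_of_nonneg_of_nonpos (by positivity) hle
  have h1_nonneg : 0 ≤ c * (2 * b * v 1 + t * v 0) ^ 2 := by positivity
  have h2_nonneg : 0 ≤ b * (2 * c * v 2 + s * v 0) ^ 2 := by positivity
  have h0_nonneg : 0 ≤ ternaryDisc a b c 0 s t * v 0 ^ 2 := by positivity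
  have h0 : v 0 = 0 := by
    have h : ternaryDisc a b c 0 s t * v 0 ^ 2 = 0 := by linarith
    simpa [hd.ne'] using h
  have h1 : v 1 = 0 := by
    have h : c * (2 * b * v 1 + t * v 0) ^ 2 = 0 := by linarith
    simpa [h0, hb.ne', hc.ne'] using h
  have h2 : v 2 = 0 := by
    have h : b * (2 * c * v 2 + s * v 0) ^ 2 = 0 := by linarith
    simpa [h0, hb.ne', hc.ne'] using h
  exact hv (by ext i; fin_cases i <;> assumption)

theorem isSquareAddLoeschian_of_sq_add_eq {a p m δ s τ : ℤ} (hp : 0 < p) (hm : 0 < m)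
    (hτ : τ ^ 2 + δ = p * a) (h : p * s ^ 2 + 3 = 4 * m * δ) : IsSquareAddLoeschian m := by
  -- the coefficient `a` makes `ax² + py² + mz² + sxz + 2τxy` have half-discriminant `4mδ - ps²`
  have hdisc : ternaryDisc a p m 0 s (2 * τ) = 3 := by
    unfold ternaryDisc
    linear_combination -4 * m * hτ - h
  have hvalue : ternaryForm a p m 0 s (2 * τ) (Pi.single 2 1) = m := by simp [ternaryForm_apply]
  rw [← hvalue]
  exact isSquareAddLoeschian_of_posDef (posDef_ternaryForm hp hm (by omega)) _
    (by rw [det_toMatrix_polarBilin_ternaryForm, hdisc]; rfl) _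

theorem jacobiSym_neg_three_eq_one {δ : ℕ} (hδ : δ % 6 = 1) : J(-3 | δ) = 1 := by
  rw [jacobiSym.mod_right (-3) (by rw [Nat.odd_iff]; omega)]
  obtain h | h : δ % 12 = 1 ∨ δ % 12 = 7 := by omega
  all_goals norm_num [h]

theorem isSquare_neg_of_dvd_mul_sq_add_three {p δ s : ℕ} [Fact p.Prime] (hp : p % 4 = 1)
    (hδ : δ % 6 = 1) (h : δ ∣ p * s ^ 2 + 3) : IsSquare ((-δ : ℤ) : ZMod p) := by
  have hδ_odd : Odd δ := by rw [Nat.odd_iff]; omega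
  have hp_odd : Odd p := by rw [Nat.odd_iff]; omega
  have hmod : (p * s ^ 2 : ℤ) ≡ -3 [ZMOD δ] :=
    (Int.modEq_iff_dvd.2 (by rw [sub_neg_eq_add]; exact_mod_cast h)).symm
  have hprod : J(p | δ) * J(s | δ) ^ 2 = 1 := by
    rw [← jacobiSym.pow_left, ← jacobiSym.mul_left, jacobiSym.mod_left' hmod,
      jacobiSym_neg_three_eq_one hδ]
  have hpδ : J(p | δ) = 1 := by
    rcases jacobiSym.trichotomy s δ with h | h | h <;> simp_all
  apply ZMod.isSquare_of_jacobiSym_eq_one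
  rw [jacobiSym.neg _ hp_odd, ZMod.χ₄_nat_one_mod_four hp,
    jacobiSym.quadratic_reciprocity_one_mod_four' hδ_odd hp, hpδ, mul_one]

theorem isSquareAddLoeschian_of_prime {m δ p s : ℕ} (hp : p.Prime) (hp4 : p % 4 = 1)
    (hδ : δ % 6 = 1) (h : p * s ^ 2 + 3 = 4 * m * δ) : IsSquareAddLoeschian m := by
  have := Fact.mk hp
  have hm : 0 < m := by
    rw [pos_iff_ne_zero]
    rintro rfl
    simp at h
  obtain ⟨y, hy⟩ := isSquare_neg_of_dvd_mul_sq_add_three hp4 hδ ⟨4 * m, by rw [h, mul_comm]⟩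
  obtain ⟨τ, rfl⟩ := ZMod.intCast_surjective y
  obtain ⟨a, ha⟩ : (p : ℤ) ∣ τ ^ 2 + δ := by
    rw [← ZMod.intCast_zmod_eq_zero_iff_dvd]
    push_cast at hy ⊢
    linear_combination -hy
  exact isSquareAddLoeschian_of_sq_add_eq (s := s) (mod_cast hp.pos) (mod_cast hm) ha (mod_cast h)

theorem isSquareAddLoeschian_of_coprime {c q m s : ℕ} (hc : c % 4 = 1) (hq : 4 ∣ q)
    (hcq : c.Coprime q) (hcm : c * s ^ 2 + 3 = 4 * m) (hqm : q * s ^ 2 = 48 * m) :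
    IsSquareAddLoeschian m := by
  have hq0 : q ≠ 0 := by
    rintro rfl
    omega
  obtain ⟨p, hcp, hp, hmod⟩ := Nat.forall_exists_prime_gt_and_modEq c hq0 hcq
  obtain ⟨j, hj⟩ := (Nat.modEq_iff_dvd' hcp.le).1 hmod.symm
  obtain rfl : p = c + q * j := by omega
  -- the hypotheses are made for `p * s ^ 2 + 3 = 4 * m * δ` to hold with `δ = 12 * j + 1`
  have hp4 : (c + q * j) % 4 = 1 := by
    rwa [Nat.add_mod, Nat.mod_eq_zero_of_dvd (hq.mul_right j), add_zero, Nat.mod_mod]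
  exact isSquareAddLoeschian_of_prime (δ := 12 * j + 1) (s := s) hp hp4 (by omega)
    (by linear_combination hcm + j * hqm)

theorem isSquareAddLoeschian_of_not_three_dvd {m : ℕ} (hm : ¬ 3 ∣ m) :
    IsSquareAddLoeschian m := by
  obtain ⟨c, hc⟩ : ∃ c, c + 3 = 4 * m := ⟨4 * m - 3, by omega⟩
  have hcop : c.Coprime (48 * m) := by
    rw [show 48 * m = 6 ^ 2 + c * 12 by omega, Nat.coprime_add_mul_left_right]
    refine Nat.Coprime.pow_right 2 (Nat.coprime_mul_iff_right (m := 2) (n := 3).2 ⟨?_, ?_⟩)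
    · exact Nat.coprime_two_right.2 (by rw [Nat.odd_iff]; omega)
    · exact ((Nat.Prime.coprime_iff_not_dvd Nat.prime_three).2 (by omega)).symm
  exact isSquareAddLoeschian_of_coprime (s := 1) (by omega) (by omega) hcop (by omega) (by omega)

theorem isSquareAddLoeschian_of_mod_nine_eq_three {m : ℕ} (hm : m % 9 = 3) :
    IsSquareAddLoeschian m := by
  obtain ⟨k, rfl⟩ : 3 ∣ m := by omega
  obtain ⟨c, hc⟩ : ∃ c, 3 * c + 1 = 4 * k := ⟨(4 * k - 1) / 3, by omega⟩
  have hcop : c.Coprime (16 * k) := by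
    rw [show 16 * k = 2 ^ 2 + c * 12 by omega, Nat.coprime_add_mul_left_right]
    exact Nat.Coprime.pow_right 2 (Nat.coprime_two_right.2 (by rw [Nat.odd_iff]; omega))
  exact isSquareAddLoeschian_of_coprime (s := 3) (by omega) (by omega) hcop (by omega) (by omega)

/-! ### Passage to the quaternary form -/

theorem loeschian_nonneg (z w : ℤ) : 0 ≤ z ^ 2 + z * w + w ^ 2 := by
  nlinarith [sq_nonneg (2 * z + w), sq_nonneg w]

theorem sq_emod_three (u : ℤ) : u ^ 2 % 3 = if 3 ∣ u then 0 else 1 := by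
  split_ifs with hu
  · exact Int.emod_eq_zero_of_dvd (dvd_pow hu two_ne_zero)
  · obtain h | h : u % 3 = 1 ∨ u % 3 = 2 := by omega
    all_goals norm_num [pow_two, Int.mul_emod, h]

theorem loeschian_emod_three (v w : ℤ) :
    (v ^ 2 + v * w + w ^ 2) % 3 = if 3 ∣ v - w then 0 else 1 := by
  rw [← sq_emod_three, show v ^ 2 + v * w + w ^ 2 = (v - w) ^ 2 + 3 * (v * w) by ring,
    Int.add_mul_emod_self_left]

theorem three_dvd_of_three_dvd_sq_add_sq {x y : ℤ} (h : 3 ∣ x ^ 2 + y ^ 2) : 3 ∣ x ∧ 3 ∣ y := by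
  have hx := sq_emod_three x
  have hy := sq_emod_three y
  split_ifs at hx hy <;> omega

/-- Splits the factor `√-3` off an Eisenstein integer of norm divisible by `3`. -/
theorem exists_loeschian_eq_three_mul {v w : ℤ} (h : 3 ∣ v - w) :
    ∃ z t : ℤ, v ^ 2 + v * w + w ^ 2 = 3 * (z ^ 2 + z * t + t ^ 2) := by
  obtain ⟨k, hk⟩ := h
  obtain rfl : v = w + 3 * k := by linarith
  exact ⟨w + k, k, by ring⟩

theorem exists_loeschian_eq_sq_add_three_mul_sq (v w : ℤ) :
    ∃ p r : ℤ, v ^ 2 + v * w + w ^ 2 = p ^ 2 + 3 * r ^ 2 := by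
  -- one of `v`, `w`, `v + w` is even, and completing the square with respect to it is integral
  rcases Int.even_or_odd' v with ⟨k, rfl | rfl⟩
  · exact ⟨k + w, k, by ring⟩
  rcases Int.even_or_odd' w with ⟨l, rfl | rfl⟩
  · exact ⟨2 * k + 1 + l, l, by ring⟩
  · exact ⟨k - l, k + l + 1, by ring⟩

/-- `Represents a b n` says that the form `ax² + by² + 3(z² + zw + w²)` takes the value `n`. -/
def Represents (a b n : ℤ) : Prop :=
  ∃ x y z w : ℤ, n = a * x ^ 2 + b * y ^ 2 + 3 * (z ^ 2 + z * w + w ^ 2)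

theorem Represents.three_mul {k : ℤ} (h : Represents 1 2 k) : Represents 1 2 (3 * k) := by
  obtain ⟨x, y, z, w, rfl⟩ := h
  exact ⟨x + 2 * y, x - y, z - w, z + 2 * w, by ring⟩

theorem IsSquareAddLoeschian.exists_eq_sq_add_three_mul {m : ℤ} (h : IsSquareAddLoeschian m)
    (hm : m % 3 ≠ 2) : ∃ x z w : ℤ, m = x ^ 2 + 3 * (z ^ 2 + z * w + w ^ 2) := by
  obtain ⟨u, v, w, rfl⟩ := h
  by_cases hvw : 3 ∣ v - w
  · obtain ⟨z, t, hzt⟩ := exists_loeschian_eq_three_mul hvw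
    exact ⟨u, z, t, by rw [hzt]⟩
  · have hu : 3 ∣ u := by
      by_contra hu
      have hsq := sq_emod_three u
      have hloeschian := loeschian_emod_three v w
      rw [if_neg hu] at hsq
      rw [if_neg hvw] at hloeschian
      omega
    obtain ⟨k, rfl⟩ := hu
    obtain ⟨p, r, hpr⟩ := exists_loeschian_eq_sq_add_three_mul_sq v w
    exact ⟨p, r - k, 2 * k, by rw [hpr]; ring⟩

theorem IsSquareAddLoeschian.represents_add_mul_sq {m : ℤ} (h : IsSquareAddLoeschian m)
    (hm : m % 3 ≠ 2) (b y : ℤ) : Represents 1 b (m + b * y ^ 2) := by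
  obtain ⟨x, z, w, rfl⟩ := h.exists_eq_sq_add_three_mul hm
  exact ⟨x, y, z, w, by ring⟩

theorem represents_one_two_of_mod_three_eq_one {n : ℕ} (hn : n % 3 = 1) : Represents 1 2 n := by
  simpa using (isSquareAddLoeschian_of_not_three_dvd (m := n) (by omega)).represents_add_mul_sq
    (by omega) 2 0

theorem represents_one_two_of_sub_two_mul_sq_mod_nine {n y : ℕ} (hy : 2 * y ^ 2 ≤ n)
    (hn : (n - 2 * y ^ 2) % 9 = 3) : Represents 1 2 n := by
  have h := (isSquareAddLoeschian_of_mod_nine_eq_three hn).represents_add_mul_sq (by omega) 2 y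
  rwa [Nat.cast_sub hy, Nat.cast_mul, Nat.cast_pow, Nat.cast_ofNat, sub_add_cancel] at h

theorem represents_one_two_of_mod_three_eq_two {n : ℕ} (hn : n % 3 = 2) : Represents 1 2 n := by
  -- `2y²` is `2`, `8`, `5` modulo `9` for `y = 1, 2, 4`
  obtain h | ⟨h, hle⟩ | ⟨h, hle⟩ | rfl | rfl | rfl | rfl :
      n % 9 = 5 ∨ (n % 9 = 2 ∧ 8 ≤ n) ∨ (n % 9 = 8 ∧ 32 ≤ n) ∨ n = 2 ∨ n = 8 ∨ n = 17 ∨ n = 26 := by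
    omega
  · exact represents_one_two_of_sub_two_mul_sq_mod_nine (y := 1) (by omega) (by omega)
  · exact represents_one_two_of_sub_two_mul_sq_mod_nine (y := 2) (by omega) (by omega)
  · exact represents_one_two_of_sub_two_mul_sq_mod_nine (y := 4) (by omega) (by omega)
  · exact ⟨0, 1, 0, 0, by norm_num⟩
  · exact ⟨0, 2, 0, 0, by norm_num⟩
  · exact ⟨3, 2, 0, 0, by norm_num⟩
  · exact ⟨3, 2, 1, 1, by norm_num⟩

theorem represents_one_two (n : ℕ) : Represents 1 2 n := by
  induction n using Nat.strong_induction_on with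
  | _ n ih =>
  obtain h | h | h : n % 3 = 0 ∨ n % 3 = 1 ∨ n % 3 = 2 := by omega
  · obtain ⟨k, rfl⟩ := Nat.dvd_of_mod_eq_zero h
    rcases k.eq_zero_or_pos with rfl | hk
    · exact ⟨0, 0, 0, 0, by norm_num⟩
    · exact_mod_cast (ih k (by omega)).three_mul
  · exact represents_one_two_of_mod_three_eq_one h
  · exact represents_one_two_of_mod_three_eq_two h

/-! ### Forms representing `1`, `2` and `6` -/

theorem le_mul_sq {c x : ℤ} (hc : 0 ≤ c) (hx : x ≠ 0) : c ≤ c * x ^ 2 :=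
  le_mul_of_one_le_right hc (Int.add_one_le_iff.2 (sq_pos_of_ne_zero hx))

theorem Represents.le_of_not_three_dvd {a b n : ℤ} (h : Represents a b n) (ha : 0 ≤ a)
    (hab : a ≤ b) (hn : ¬ 3 ∣ n) : a ≤ n := by
  obtain ⟨x, y, z, w, rfl⟩ := h
  have hx_nonneg : 0 ≤ a * x ^ 2 := by positivity
  have hy_nonneg : 0 ≤ b * y ^ 2 := mul_nonneg (ha.trans hab) (sq_nonneg y)
  have hzw := loeschian_nonneg z w
  rcases eq_or_ne x 0 with rfl | hx
  · have hy : y ≠ 0 := by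
      rintro rfl
      simp at hn
    linarith [le_mul_sq (ha.trans hab) hy]
  · linarith [le_mul_sq ha hx]

theorem Represents.le_of_emod_three_eq_two {b n : ℤ} (h : Represents 1 b n) (hb : 0 ≤ b)
    (hn : n % 3 = 2) : b ≤ n := by
  obtain ⟨x, y, z, w, rfl⟩ := h
  have hy : y ≠ 0 := by
    rintro rfl
    have hx := sq_emod_three x
    split_ifs at hx <;> omega
  linarith [le_mul_sq hb hy, sq_nonneg x, loeschian_nonneg z w]

theorem not_represents_one_one {n : ℤ} (hn : n % 9 = 6) : ¬ Represents 1 1 n := by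
  rintro ⟨x, y, z, w, rfl⟩
  obtain ⟨⟨x, rfl⟩, y, rfl⟩ := three_dvd_of_three_dvd_sq_add_sq (x := x) (y := y) (by omega)
  have hzw := loeschian_emod_three z w
  split_ifs at hzw <;> grind

theorem stmt_14 (a b : ℕ) (ha : 0 < a) (hb : 0 < b) (hab : a ≤ b)
    (h : ∀ n ∈ ({1, 2, 6} : Set ℕ), ∃ x y z w : ℤ,
      (n : ℤ) = a * x ^ 2 + b * y ^ 2 + 3 * (z ^ 2 + z * w + w ^ 2)) :
    ∀ n : ℕ, ∃ x y z w : ℤ,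
      (n : ℤ) = a * x ^ 2 + b * y ^ 2 + 3 * (z ^ 2 + z * w + w ^ 2) := by
  have h1 : Represents a b 1 := h 1 (by simp)
  obtain rfl : a = 1 := by
    have := h1.le_of_not_three_dvd (by positivity) (mod_cast hab) (by norm_num)
    omega
  have h2 : Represents 1 b 2 := h 2 (by simp)
  have h6 : Represents 1 b 6 := h 6 (by simp)
  have hb1 : b ≠ 1 := by
    rintro rfl
    exact not_represents_one_one (by norm_num) h6
  obtain rfl : b = 2 := by
    have := h2.le_of_emod_three_eq_two (by positivity) (by norm_num)
    omega
  exact represents_one_two
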